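/- Let X be a pospace, t a trace in X, and α₀ the trace of the constant dipath at the initial point t(0) of t. Then the interval [α₀, t] in the trace poset tpos(X) is totally ordered; consequently, every chain in tpos(X) with least element α₀ and greatest element t is contained in [α₀, t], and [α₀, t] is the unique maximal chain in tpos(X) with least element α₀ and greatest element t. The same statements hold with the terminal point α₁ (the trace of the constant dipath at t(1)) in place of α₀. -/

import Mathlib

open unitInterval

noncomputable section

/-- A reparametrization of the unit interval: continuous, monotone, fixing the endpoints. -/
def IsReparam (φ : unitInterval → unitInterval) : Prop :=
  Continuous φ ∧ Monotone φ ∧ φ 0 = 0 ∧ φ 1 = 1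

/-- Reparametrization equivalence of paths. -/
def ReparamEquiv {X : Type*} (f g : unitInterval → X) : Prop :=
  ∃ φ ψ : unitInterval → unitInterval, IsReparam φ ∧ IsReparam ψ ∧ f ∘ φ = g ∘ ψ

/-- A dipath in a pospace: a continuous monotone map `[0,1] → X`. -/
def IsDipath {X : Type*} [TopologicalSpace X] [Preorder X] (p : unitInterval → X) : Prop :=
  Continuous p ∧ Monotone p

/-- Concatenation of paths: `f` (rescaled) on `[0,1/2]`, `g` (rescaled) on `[1/2,1]`. -/
def concatFun {X : Type*} (f g : unitInterval → X) : unitInterval → X :=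
  fun t => if (t : ℝ) ≤ 1 / 2 then f (Set.projIcc 0 1 zero_le_one (2 * (t : ℝ)))
    else g (Set.projIcc 0 1 zero_le_one (2 * (t : ℝ) - 1))

/-- Traces: paths up to reparametrization equivalence. -/
def Trace (X : Type*) : Type _ := Quot (ReparamEquiv (X := X))

/-- The trace of a path. -/
def trc {X : Type*} (f : unitInterval → X) : Trace X := Quot.mk _ f

/-- The order on traces of a pospace: `⟨f⟩ ≤ ⟨g⟩` iff `⟨g⟩ = ⟨u⟩ ⋆ ⟨f⟩ ⋆ ⟨v⟩` for dipaths `u,v`. -/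
def TraceLE {X : Type*} [TopologicalSpace X] [PartialOrder X] (a b : Trace X) : Prop :=
  ∃ f u v : unitInterval → X,
    IsDipath f ∧ IsDipath u ∧ IsDipath v ∧
    u 1 = f 0 ∧ f 1 = v 0 ∧
    a = trc f ∧ b = trc (concatFun (concatFun u f) v)

/-- The interval `[a, b]` in the trace poset. -/
def TInterval {X : Type*} [TopologicalSpace X] [PartialOrder X] (a b : Trace X) :
    Set (Trace X) :=
  {c | TraceLE a c ∧ TraceLE c b}

section Helpers

variable {X : Type*}

lemma IsReparam.surj {φ : unitInterval → unitInterval} (h : IsReparam φ) :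
    Function.Surjective φ := by
  obtain ⟨hc, -, h0, h1⟩ := h
  intro y
  have := intermediate_value_univ (0 : unitInterval) 1 hc
  rw [h0, h1] at this
  exact this ⟨unitInterval.nonneg', unitInterval.le_one'⟩

lemma reparam_range {f g : unitInterval → X} (h : ReparamEquiv f g) :
    Set.range f = Set.range g := by
  obtain ⟨φ, ψ, hφ, hψ, e⟩ := h
  rw [← hφ.surj.range_comp f, e, hψ.surj.range_comp g]

lemma reparam_symm {f g : unitInterval → X} (h : ReparamEquiv f g) : ReparamEquiv g f := by
  obtain ⟨φ, ψ, hφ, hψ, e⟩ := h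
  exact ⟨ψ, φ, hψ, hφ, e.symm⟩

lemma reparam_dipath [TopologicalSpace X] [PartialOrder X] {f g : unitInterval → X}
    (h : ReparamEquiv f g) (hf : IsDipath f) : IsDipath g := by
  obtain ⟨φ, ψ, hφ, hψ, e⟩ := h
  constructor
  · have hq : Topology.IsQuotientMap ψ := hψ.1.isClosedMap.isQuotientMap hψ.1 hψ.surj
    rw [hq.continuous_iff, ← e]
    exact hf.1.comp hφ.1
  · intro a b hab
    rcases hab.eq_or_lt with rfl | hab
    · exact le_rfl
    obtain ⟨s, rfl⟩ := hψ.surj a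
    obtain ⟨s', rfl⟩ := hψ.surj b
    have hs : s ≤ s' := by
      by_contra hc
      exact absurd (hψ.2.1 (not_le.1 hc).le) (not_le.2 hab)
    have e1 := congrFun e s
    have e2 := congrFun e s'
    simp only [Function.comp] at e1 e2
    rw [← e1, ← e2]
    exact hf.2 (hφ.2.1 hs)

def trcRange : Trace X → Set X := Quot.lift (fun f => Set.range f) (fun _ _ h => reparam_range h)

def trcDi [TopologicalSpace X] [PartialOrder X] : Trace X → Prop :=
  Quot.lift (fun f => IsDipath f)
    (fun _ _ h => propext ⟨reparam_dipath h, reparam_dipath (reparam_symm h)⟩)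

lemma trc_eq_of_range_eq [TopologicalSpace X] [PartialOrder X] [OrderClosedTopology X]
    {f g : unitInterval → X} (hf : IsDipath f) (hg : IsDipath g)
    (h : Set.range f = Set.range g) : ReparamEquiv f g := by
  have htot : ∀ a b, f a ≤ g b ∨ g b ≤ f a := by
    intro a b
    obtain ⟨c, hc⟩ : g b ∈ Set.range f := h ▸ ⟨b, rfl⟩
    rw [← hc]
    exact (le_total a c).imp (fun k => hf.2 k) (fun k => hf.2 k)
  have hmin : ∀ b, f 0 ≤ g b := by
    intro b
    obtain ⟨c, hc⟩ : g b ∈ Set.range f := h ▸ ⟨b, rfl⟩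
    exact hc ▸ hf.2 unitInterval.nonneg'
  have hmax : ∀ b, g b ≤ f 1 := by
    intro b
    obtain ⟨c, hc⟩ : g b ∈ Set.range f := h ▸ ⟨b, rfl⟩
    exact hc ▸ hf.2 unitInterval.le_one'
  have hmin' : ∀ b, g 0 ≤ f b := by
    intro b
    obtain ⟨c, hc⟩ : f b ∈ Set.range g := h ▸ ⟨b, rfl⟩
    exact hc ▸ hg.2 unitInterval.nonneg'
  have hmax' : ∀ b, f b ≤ g 1 := by
    intro b
    obtain ⟨c, hc⟩ : f b ∈ Set.range g := h ▸ ⟨b, rfl⟩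
    exact hc ▸ hg.2 unitInterval.le_one'
  let P : ℝ → unitInterval := Set.projIcc 0 1 zero_le_one
  have hPc : Continuous P := continuous_projIcc
  have hPm : Monotone P := Set.monotone_projIcc _
  have hP0 : P 0 = 0 := Set.projIcc_left _
  have hP1 : P 1 = 1 := Set.projIcc_right _
  let F : ℝ → X := fun s => f (P s)
  let G : ℝ → X := fun s => g (P s)
  have hFc : Continuous F := hf.1.comp hPc
  have hGc : Continuous G := hg.1.comp hPc
  have hFm : Monotone F := hf.2.comp hPm
  have hGm : Monotone G := hg.2.comp hPm
  let S : ℝ → Set ℝ := fun r => {s | (0 ≤ s ∧ r - 1 ≤ s) ∧ (s ≤ 1 ∧ s ≤ r) ∧ F s ≤ G (r - s)}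
  let τ : ℝ → ℝ := fun r => sSup (S r)
  have hbdd : ∀ r, BddAbove (S r) := fun r => ⟨1, fun s hs => hs.2.1.1⟩
  have hcl : ∀ r, IsClosed (S r) := by
    intro r
    refine IsClosed.and (IsClosed.and ?_ ?_) (IsClosed.and (IsClosed.and ?_ ?_) ?_)
    all_goals refine isClosed_le ?_ ?_
    all_goals fun_prop
  have hne : ∀ r, 0 ≤ r → r ≤ 2 → (S r).Nonempty := by
    intro r h0 h2
    rcases le_total r 1 with h1 | h1
    · refine ⟨0, ⟨le_rfl, by linarith⟩, ⟨zero_le_one, h0⟩, ?_⟩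
      change f (P 0) ≤ _
      rw [hP0]; exact hmin _
    · refine ⟨r - 1, ⟨by linarith, le_rfl⟩, ⟨by linarith, by linarith⟩, ?_⟩
      change _ ≤ g (P _)
      rw [show r - (r - 1) = 1 by ring, hP1]; exact hmax' _
  have hmem : ∀ r, 0 ≤ r → r ≤ 2 → τ r ∈ S r := fun r h0 h2 =>
    (hcl r).csSup_mem (hne r h0 h2) (hbdd r)
  have hle : ∀ r s, s ∈ S r → s ≤ τ r := fun r s hs => le_csSup (hbdd r) hs
  have hmono : ∀ r r', 0 ≤ r → r ≤ r' → r' ≤ 2 → τ r ≤ τ r' := by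
    intro r r' h0 hrr h2
    obtain ⟨⟨a1, a2⟩, ⟨a3, a4⟩, a5⟩ := hmem r h0 (hrr.trans h2)
    obtain ⟨⟨b1, b2⟩, ⟨b3, b4⟩, b5⟩ := hmem r' (h0.trans hrr) h2
    by_cases hc : r' - 1 ≤ τ r
    · exact hle _ _ ⟨⟨a1, hc⟩, ⟨a3, a4.trans hrr⟩, a5.trans (hGm (by linarith))⟩
    · linarith
  have hlip : ∀ r r', 0 ≤ r → r ≤ r' → r' ≤ 2 → τ r' - τ r ≤ r' - r := by
    intro r r' h0 hrr h2
    obtain ⟨⟨a1, a2⟩, ⟨a3, a4⟩, a5⟩ := hmem r h0 (hrr.trans h2)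
    obtain ⟨⟨b1, b2⟩, ⟨b3, b4⟩, b5⟩ := hmem r' (h0.trans hrr) h2
    by_cases hc : 0 ≤ τ r' - (r' - r)
    · have := hle r (τ r' - (r' - r)) ⟨⟨hc, by linarith⟩, ⟨by linarith, by linarith⟩, by
        rw [show r - (τ r' - (r' - r)) = r' - τ r' by ring]
        exact (hFm (by linarith)).trans b5⟩
      linarith
    · linarith
  have heq : ∀ r, 0 ≤ r → r ≤ 2 → F (τ r) = G (r - τ r) := by
    intro r h0 h2
    obtain ⟨⟨a1, a2⟩, ⟨a3, a4⟩, a5⟩ := hmem r h0 h2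
    refine le_antisymm a5 ?_
    rcases a3.eq_or_lt with e | a3
    · change _ ≤ f (P (τ r))
      rw [e, hP1]; exact hmax _
    rcases a4.eq_or_lt with e | a4
    · change g (P (r - τ r)) ≤ _
      rw [show r - τ r = 0 by linarith, hP0]; exact hmin' _
    have ht1 : Filter.Tendsto (fun s => G (r - s)) (nhdsWithin (τ r) (Set.Ioi (τ r)))
        (nhds (G (r - τ r))) :=
      ((hGc.comp (continuous_const.sub continuous_id)).tendsto (τ r)).mono_left
        nhdsWithin_le_nhds
    have ht2 : Filter.Tendsto F (nhdsWithin (τ r) (Set.Ioi (τ r))) (nhds (F (τ r))) :=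
      (hFc.tendsto (τ r)).mono_left nhdsWithin_le_nhds
    refine le_of_tendsto_of_tendsto ht1 ht2 ?_
    filter_upwards [Ioo_mem_nhdsGT (lt_min a3 a4)] with s hs
    have hs1 := hs.2.trans_le (min_le_left _ _)
    have hs2 := hs.2.trans_le (min_le_right _ _)
    have hs0 := hs.1
    rcases htot (P s) (P (r - s)) with hh | hh
    · have := hle r s ⟨⟨by linarith, by linarith⟩, ⟨hs1.le, hs2.le⟩, hh⟩
      linarith
    · exact hh
  have hx : ∀ x : unitInterval, 0 ≤ 2 * (x : ℝ) ∧ 2 * (x : ℝ) ≤ 2 := fun x =>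
    ⟨by linarith [x.2.1], by linarith [x.2.2]⟩
  have hτc : Continuous (fun x : unitInterval => τ (2 * (x : ℝ))) := by
    refine LipschitzWith.continuous (K := 2) (LipschitzWith.of_le_add_mul 2 ?_)
    intro x y
    rw [Subtype.dist_eq, Real.dist_eq]
    push_cast
    rcases le_total x y with hxy | hxy
    · have hxy' : (x : ℝ) ≤ y := hxy
      have := hmono (2 * x) (2 * y) (hx x).1 (by linarith) (hx y).2
      have := abs_nonneg ((x : ℝ) - y)
      linarith
    · have hxy' : (y : ℝ) ≤ x := hxy
      have := hlip (2 * y) (2 * x) (hx y).1 (by linarith) (hx x).2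
      have := le_abs_self ((x : ℝ) - y)
      linarith
  have hτ0 : τ 0 = 0 := by
    have := hmem 0 le_rfl zero_le_two
    exact le_antisymm this.2.1.2 this.1.1
  have hτ2 : τ 2 = 1 := by
    have := hmem 2 zero_le_two le_rfl
    have h1 := this.1.2
    have h2 := this.2.1.1
    linarith
  refine ⟨fun x => P (τ (2 * (x : ℝ))), fun x => P (2 * (x : ℝ) - τ (2 * (x : ℝ))),
    ⟨hPc.comp hτc, ?_, ?_, ?_⟩, ⟨hPc.comp ((continuous_const.mul continuous_subtype_val).sub hτc), ?_, ?_, ?_⟩, ?_⟩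
  · intro x y hxy
    have hxy' : (x : ℝ) ≤ y := hxy
    exact hPm (hmono _ _ (hx x).1 (by linarith) (hx y).2)
  · simp [hτ0, hP0]
  · simp [hτ2, hP1]
  · intro x y hxy
    have hxy' : (x : ℝ) ≤ y := hxy
    have := hlip _ _ (hx x).1 (by linarith) (hx y).2
    exact hPm (by linarith)
  · simp [hτ0, hP0]
  · change P (2 * (1 : ℝ) - τ (2 * (1 : ℝ))) = 1
    rw [mul_one, hτ2, show (2 : ℝ) - 1 = 1 by norm_num, hP1]
  · funext x
    exact heq _ (hx x).1 (hx x).2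

lemma concat_range {f g : unitInterval → X} (h : f 1 = g 0) :
    Set.range (concatFun f g) = Set.range f ∪ Set.range g := by
  ext y
  constructor
  · rintro ⟨t, rfl⟩
    unfold concatFun
    split_ifs
    · exact Or.inl ⟨_, rfl⟩
    · exact Or.inr ⟨_, rfl⟩
  · rintro (⟨s, rfl⟩ | ⟨s, rfl⟩)
    · refine ⟨⟨(s : ℝ) / 2, by linarith [s.2.1], by linarith [s.2.2]⟩, ?_⟩
      unfold concatFun
      rw [if_pos (by change (s : ℝ) / 2 ≤ 1 / 2; linarith [s.2.2])]
      congr 1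
      change Set.projIcc 0 1 _ (2 * ((s : ℝ) / 2)) = s
      rw [mul_div_cancel₀ _ two_ne_zero]
      exact Set.projIcc_val _ s
    · rcases s.2.1.eq_or_lt with e | e
      · have hs : s = 0 := Subtype.ext e.symm
        refine ⟨⟨1 / 2, by norm_num, by norm_num⟩, ?_⟩
        unfold concatFun
        rw [if_pos le_rfl, hs, ← h]
        congr 1
        change Set.projIcc 0 1 _ (2 * ((1 : ℝ) / 2)) = 1
        rw [mul_div_cancel₀ _ two_ne_zero]
        exact Set.projIcc_right _
      · refine ⟨⟨((s : ℝ) + 1) / 2, by linarith [s.2.1], by linarith [s.2.2]⟩, ?_⟩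
        unfold concatFun
        rw [if_neg (by change ¬ (((s : ℝ) + 1) / 2 ≤ 1 / 2); linarith)]
        congr 1
        change Set.projIcc 0 1 _ (2 * (((s : ℝ) + 1) / 2) - 1) = s
        rw [mul_div_cancel₀ _ two_ne_zero, add_sub_cancel_right]
        exact Set.projIcc_val _ s

lemma concat_one {f g : unitInterval → X} : concatFun f g 1 = g 1 := by
  unfold concatFun
  rw [if_neg (by norm_num)]
  congr 1
  norm_num

lemma concat_dipath [TopologicalSpace X] [PartialOrder X] {f g : unitInterval → X}
    (hf : IsDipath f) (hg : IsDipath g) (h : f 1 = g 0) : IsDipath (concatFun f g) := by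
  constructor
  · unfold concatFun
    refine Continuous.if_le ?_ ?_ (by fun_prop) (by fun_prop) ?_
    · exact hf.1.comp (continuous_projIcc.comp (by fun_prop))
    · exact hg.1.comp (continuous_projIcc.comp (by fun_prop))
    · intro x hx
      rw [hx]
      norm_num
      exact h
  · intro x y hxy
    have hxy' : (x : ℝ) ≤ y := hxy
    unfold concatFun
    split_ifs with h1 h2 h2
    · exact hf.2 (Set.monotone_projIcc _ (by linarith))
    · exact (hf.2 unitInterval.le_one').trans (h.le.trans (hg.2 unitInterval.nonneg'))
    · exact absurd (hxy'.trans h2) h1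
    · exact hg.2 (Set.monotone_projIcc _ (by linarith))

lemma dipath_ivt [TopologicalSpace X] [PartialOrder X] [OrderClosedTopology X]
    {h : unitInterval → X} (hh : IsDipath h) {y : X} (h0 : h 0 ≤ y) (h1 : y ≤ h 1)
    (ht : ∀ s, h s ≤ y ∨ y ≤ h s) : y ∈ Set.range h := by
  have hc := isPreconnected_closed_iff.1 (isPreconnected_univ (α := unitInterval))
    {s | h s ≤ y} {s | y ≤ h s} (isClosed_le hh.1 continuous_const)
    (isClosed_le continuous_const hh.1) (fun s _ => ht s) ⟨0, trivial, h0⟩ ⟨1, trivial, h1⟩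
  obtain ⟨s, -, hs1, hs2⟩ := hc
  exact ⟨s, le_antisymm hs1 hs2⟩

lemma traceLE_of_subset [TopologicalSpace X] [PartialOrder X] [OrderClosedTopology X]
    {h k : unitInterval → X} (hh : IsDipath h) (hk : IsDipath k)
    (hs : Set.range h ⊆ Set.range k) : TraceLE (trc h) (trc k) := by
  obtain ⟨s0, e0⟩ := hs ⟨0, rfl⟩
  obtain ⟨s1, e1⟩ := hs ⟨1, rfl⟩
  have hu : IsDipath (fun s => k (min s0 s)) :=
    ⟨hk.1.comp (by fun_prop), fun a b hab => hk.2 (min_le_min_left _ hab)⟩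
  have hv : IsDipath (fun s => k (max s1 s)) :=
    ⟨hk.1.comp (by fun_prop), fun a b hab => hk.2 (max_le_max_left _ hab)⟩
  have c1 : (fun s => k (min s0 s)) 1 = h 0 := by
    change k (min s0 1) = _
    rw [min_eq_left unitInterval.le_one', e0]
  have c2 : h 1 = (fun s => k (max s1 s)) 0 := by
    change _ = k (max s1 0)
    rw [max_eq_left unitInterval.nonneg', e1]
  have c3 : concatFun (fun s => k (min s0 s)) h 1 = (fun s => k (max s1 s)) 0 := by
    rw [concat_one, c2]
  refine ⟨h, _, _, hh, hu, hv, c1, c2, rfl, Quot.sound (trc_eq_of_range_eq hk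
    (concat_dipath (concat_dipath hu hh c1) hv c3) ?_)⟩
  rw [concat_range c3, concat_range c1]
  apply Set.Subset.antisymm
  · rintro _ ⟨s, rfl⟩
    rcases le_total s s0 with a | a
    · exact Or.inl (Or.inl ⟨s, by simp [min_eq_right a]⟩)
    rcases le_total s1 s with b | b
    · exact Or.inr ⟨s, by simp [max_eq_right b]⟩
    refine Or.inl (Or.inr (dipath_ivt hh (e0 ▸ hk.2 a) (e1 ▸ hk.2 b) fun r => ?_))
    obtain ⟨q, hq⟩ := hs ⟨r, rfl⟩
    rw [← hq]
    exact (le_total q s).imp (fun z => hk.2 z) (fun z => hk.2 z)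
  · rintro _ ((⟨s, rfl⟩ | hy) | ⟨s, rfl⟩)
    · exact ⟨_, rfl⟩
    · exact hs hy
    · exact ⟨_, rfl⟩

lemma traceLE_elim [TopologicalSpace X] [PartialOrder X] {a b : Trace X} (h : TraceLE a b) :
    (∃ f, IsDipath f ∧ a = trc f) ∧ trcRange a ⊆ trcRange b := by
  obtain ⟨f, u, v, hf, hu, hv, c1, c2, rfl, rfl⟩ := h
  refine ⟨⟨f, hf, rfl⟩, ?_⟩
  change Set.range f ⊆ Set.range (concatFun (concatFun u f) v)
  rw [concat_range (by rw [concat_one, c2]), concat_range c1]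
  exact fun y hy => Or.inl (Or.inr hy)

lemma interval_total [TopologicalSpace X] [PartialOrder X] [OrderClosedTopology X]
    {f : unitInterval → X} (hf : IsDipath f) {α : Trace X}
    (hα : α = trc (fun _ => f 0) ∨ α = trc (fun _ => f 1)) :
    ∀ a ∈ TInterval α (trc f), ∀ b ∈ TInterval α (trc f), TraceLE a b ∨ TraceLE b a := by
  rintro a ⟨ha1, ha2⟩ b ⟨hb1, hb2⟩
  obtain ⟨⟨h, hh, rfl⟩, hhs⟩ := traceLE_elim ha2
  obtain ⟨⟨k, hk, rfl⟩, hks⟩ := traceLE_elim hb2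
  have ha := (traceLE_elim ha1).2
  have hb := (traceLE_elim hb1).2
  change Set.range h ⊆ Set.range f at hhs
  change Set.range k ⊆ Set.range f at hks
  have tot : ∀ x ∈ Set.range f, ∀ y ∈ Set.range f, x ≤ y ∨ y ≤ x := by
    rintro _ ⟨x, rfl⟩ _ ⟨y, rfl⟩
    exact (le_total x y).imp (fun z => hf.2 z) (fun z => hf.2 z)
  have hm : ∀ x ∈ Set.range f, f 0 ≤ x ∧ x ≤ f 1 := by
    rintro _ ⟨x, rfl⟩
    exact ⟨hf.2 unitInterval.nonneg', hf.2 unitInterval.le_one'⟩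
  rcases hα with rfl | rfl
  · have key : ∀ p q : unitInterval → X, IsDipath p → IsDipath q → Set.range p ⊆ Set.range f →
        Set.range q ⊆ Set.range f → f 0 ∈ Set.range q → p 1 ≤ q 1 →
        TraceLE (trc p) (trc q) := by
      intro p q hp hq hps hqs h0 hpq
      obtain ⟨r, hr⟩ := h0
      refine traceLE_of_subset hp hq ?_
      rintro _ ⟨s, rfl⟩
      refine dipath_ivt hq ?_ ((hp.2 unitInterval.le_one').trans hpq)
        fun z => tot _ (hqs ⟨z, rfl⟩) _ (hps ⟨s, rfl⟩)
      exact ((hq.2 unitInterval.nonneg').trans hr.le).trans (hm _ (hps ⟨s, rfl⟩)).1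
    exact (tot _ (hhs ⟨1, rfl⟩) _ (hks ⟨1, rfl⟩)).imp
      (key h k hh hk hhs hks (hb ⟨0, rfl⟩)) (key k h hk hh hks hhs (ha ⟨0, rfl⟩))
  · have key : ∀ p q : unitInterval → X, IsDipath p → IsDipath q → Set.range p ⊆ Set.range f →
        Set.range q ⊆ Set.range f → f 1 ∈ Set.range q → q 0 ≤ p 0 →
        TraceLE (trc p) (trc q) := by
      intro p q hp hq hps hqs h0 hpq
      obtain ⟨r, hr⟩ := h0
      refine traceLE_of_subset hp hq ?_
      rintro _ ⟨s, rfl⟩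
      refine dipath_ivt hq (hpq.trans (hp.2 unitInterval.nonneg')) ?_
        fun z => tot _ (hqs ⟨z, rfl⟩) _ (hps ⟨s, rfl⟩)
      exact (hm _ (hps ⟨s, rfl⟩)).2.trans (hr.ge.trans (hq.2 unitInterval.le_one'))
    exact (tot _ (hks ⟨0, rfl⟩) _ (hhs ⟨0, rfl⟩)).imp
      (key h k hh hk hhs hks (hb ⟨0, rfl⟩)) (key k h hk hh hks hhs (ha ⟨0, rfl⟩))

end Helpers

/-- Let `X` be a pospace, `t = ⟨f⟩` a trace in `X` and `α` the trace of the
constant dipath at the initial point `f 0` (resp. at the terminal point `f 1`).  Then the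
interval `[α, t]` in the trace poset is totally ordered; every chain with least element `α` and
greatest element `t` is contained in `[α, t]`; and `[α, t]` is the unique maximal chain with
least element `α` and greatest element `t`. -/
theorem interval_from_endpoint_is_unique_maximal_chain
    {X : Type*} [TopologicalSpace X] [PartialOrder X] [T2Space X] [OrderClosedTopology X]
    (f : unitInterval → X) (hf : IsDipath f) :
    ∀ α : Trace X, (α = trc (fun _ => f 0) ∨ α = trc (fun _ => f 1)) →
      -- the interval [α, ⟨f⟩] is totally ordered
      (IsChain TraceLE (TInterval α (trc f)) ∧
        ∀ a ∈ TInterval α (trc f), ∀ b ∈ TInterval α (trc f), TraceLE a b ∨ TraceLE b a) ∧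
      -- α and ⟨f⟩ are its least and greatest elements
      (α ∈ TInterval α (trc f) ∧ trc f ∈ TInterval α (trc f)) ∧
      -- every chain with least element α and greatest element ⟨f⟩ lies in the interval
      (∀ C : Set (Trace X), IsChain TraceLE C → α ∈ C → trc f ∈ C →
        (∀ c ∈ C, TraceLE α c ∧ TraceLE c (trc f)) → C ⊆ TInterval α (trc f)) ∧
      -- the interval is the unique maximal such chain
      (∀ C : Set (Trace X), IsChain TraceLE C → α ∈ C → trc f ∈ C →
        (∀ c ∈ C, TraceLE α c ∧ TraceLE c (trc f)) →
        (∀ C' : Set (Trace X), IsChain TraceLE C' → α ∈ C' → trc f ∈ C' →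
          (∀ c ∈ C', TraceLE α c ∧ TraceLE c (trc f)) → C ⊆ C' → C' = C) →
        C = TInterval α (trc f)) := by
  intro α hα
  have htot := interval_total hf hα
  have hchain : IsChain TraceLE (TInterval α (trc f)) := fun a ha b hb _ => htot a ha b hb
  have hff : TraceLE (trc f) (trc f) := traceLE_of_subset hf hf subset_rfl
  have hc : ∀ x : X, IsDipath (fun _ : unitInterval => x) := fun x =>
    ⟨continuous_const, monotone_const⟩
  have hα' : TraceLE α α ∧ TraceLE α (trc f) := by
    rcases hα with rfl | rfl
    · exact ⟨traceLE_of_subset (hc _) (hc _) subset_rfl,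
        traceLE_of_subset (hc _) hf (by rintro _ ⟨s, rfl⟩; exact ⟨0, rfl⟩)⟩
    · exact ⟨traceLE_of_subset (hc _) (hc _) subset_rfl,
        traceLE_of_subset (hc _) hf (by rintro _ ⟨s, rfl⟩; exact ⟨1, rfl⟩)⟩
  refine ⟨⟨hchain, htot⟩, ⟨hα', ⟨hα'.2, hff⟩⟩, fun C _ _ _ h c hcC => h c hcC, ?_⟩
  intro C _ _ _ h hmax
  exact (hmax _ hchain hα' ⟨hα'.2, hff⟩ (fun c hc => hc) (fun c hcC => h c hcC)).symm

end
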